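/- Let V be a real inner product space, let n ≥ 2, let x_1, …, x_n be linearly independent vectors in V, and let d be a real number with 0 < d < √(2n/(n-1)). Then there exist vectors z_1, …, z_n in V such that span{z_1, …, z_i} = span{x_1, …, x_i} for every 1 ≤ i ≤ n, ‖z_i‖ = 1 for all 1 ≤ i ≤ n, and ‖z_i - z_j‖ = d for all i ≠ j. -/

import Mathlib

/-!
The prescribed pairwise inner products `c = 1 - d² / 2` form a matrix `(1 - c) I + c J`, which is
positive definite because `d² (n - 1) < 2 n`. A positive definite matrix is the Gram matrix of some
linearly independent family in Euclidean space. Sending the Gram–Schmidt orthonormalization of that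
family to the Gram–Schmidt orthonormalization of `x` is a linear isometry, so it preserves the Gram
matrix, and it carries the flag of the one family to the flag of the other.
-/

open InnerProductSpace Matrix Module Set Submodule
open scoped ComplexOrder MatrixOrder

section Flags

variable {𝕜 V W ι : Type*} [RCLike 𝕜]
  [NormedAddCommGroup V] [InnerProductSpace 𝕜 V] [NormedAddCommGroup W] [InnerProductSpace 𝕜 W]

theorem exists_linearIsometry_apply_eq_of_orthonormal {e : ι → W} {f : ι → V}
    (he : Orthonormal 𝕜 e) (he_span : span 𝕜 (range e) = ⊤) (hf : Orthonormal 𝕜 f) :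
    ∃ L : W →ₗᵢ[𝕜] V, ∀ i, L (e i) = f i := by
  let b : Basis ι 𝕜 W := Basis.mk he.linearIndependent he_span.ge
  have hb : ⇑b = e := Basis.coe_mk _ _
  have hL : ⇑(b.constr 𝕜 f) ∘ b = f := funext (b.constr_basis 𝕜 f)
  refine ⟨(b.constr 𝕜 f).isometryOfOrthonormal (v := b) (hb ▸ he) (hL.symm ▸ hf), fun i ↦ ?_⟩
  rw [LinearMap.coe_isometryOfOrthonormal, ← hb, b.constr_basis]

theorem exists_linearIsometry_map_span_Iic_eq [LinearOrder ι] [LocallyFiniteOrderBot ι]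
    [WellFoundedLT ι] (b : Basis ι 𝕜 W) {x : ι → V} (hx : LinearIndependent 𝕜 x) :
    ∃ L : W →ₗᵢ[𝕜] V, ∀ i,
      (span 𝕜 (b '' Iic i)).map L.toLinearMap = span 𝕜 (x '' Iic i) := by
  have hb_span : span 𝕜 (range (gramSchmidtNormed 𝕜 b)) = ⊤ := by
    rw [span_gramSchmidtNormed_range, span_gramSchmidt, b.span_eq]
  obtain ⟨L, hL⟩ := exists_linearIsometry_apply_eq_of_orthonormal
    (gramSchmidtNormed_orthonormal b.linearIndependent) hb_span (gramSchmidtNormed_orthonormal hx)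
  refine ⟨L, fun i ↦ ?_⟩
  rw [← span_gramSchmidt_Iic 𝕜 b, ← span_gramSchmidtNormed, ← span_gramSchmidt_Iic 𝕜 x,
    ← span_gramSchmidtNormed, map_span, image_image]
  simp only [LinearIsometry.coe_toLinearMap, hL]

end Flags

section GramMatrix

variable {𝕜 V ι : Type*} [RCLike 𝕜] [NormedAddCommGroup V] [InnerProductSpace 𝕜 V]

theorem exists_basis_gram_eq_of_posDef [Fintype ι] {G : Matrix ι ι 𝕜} (hG : G.PosDef) :
    ∃ b : Basis ι 𝕜 (EuclideanSpace 𝕜 ι), gram 𝕜 b = G := by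
  classical
  obtain ⟨B, hB⟩ := CStarAlgebra.nonneg_iff_eq_star_mul_self.mp hG.posSemidef.nonneg
  let y : ι → EuclideanSpace 𝕜 ι := fun j ↦ WithLp.toLp 2 (B.col j)
  have hy : gram 𝕜 y = G := by
    rw [gram_eq_conjTranspose_mul (EuclideanSpace.basisFun ι 𝕜), hB]
    rfl
  have hy_indep : LinearIndependent 𝕜 y := linearIndependent_of_posDef_gram (hy ▸ hG)
  let b := basisOfLinearIndependentOfCardEqFinrank' y hy_indep finrank_euclideanSpace.symm
  exact ⟨b, by rwa [coe_basisOfLinearIndependentOfCardEqFinrank']⟩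

theorem exists_span_Iic_eq_and_gram_eq_of_posDef [Finite ι] [LinearOrder ι] {x : ι → V}
    (hx : LinearIndependent 𝕜 x) {G : Matrix ι ι 𝕜} (hG : G.PosDef) :
    ∃ z : ι → V, (∀ i, span 𝕜 (z '' Iic i) = span 𝕜 (x '' Iic i)) ∧ gram 𝕜 z = G := by
  have := Fintype.ofFinite ι
  let : LocallyFiniteOrderBot ι := .ofIic ι (fun i ↦ {j | j ≤ i}) (by simp)
  obtain ⟨b, hb⟩ := exists_basis_gram_eq_of_posDef hG
  obtain ⟨L, hL⟩ := exists_linearIsometry_map_span_Iic_eq b hx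
  refine ⟨L ∘ b, fun i ↦ ?_, ?_⟩
  · rw [← hL, map_span, image_comp, LinearIsometry.coe_toLinearMap]
  · ext i j
    rw [← hb, gram_apply, gram_apply, Function.comp_apply, Function.comp_apply, L.inner_map_map]

end GramMatrix

section Equiangular

theorem norm_sum_sq_le_card_mul_sum_norm_sq {E ι : Type*} [SeminormedAddCommGroup E] [Fintype ι]
    (v : ι → E) :
    ‖∑ i, v i‖ ^ 2 ≤ Fintype.card ι * ∑ i, ‖v i‖ ^ 2 :=
  calc ‖∑ i, v i‖ ^ 2 ≤ (∑ i, ‖v i‖) ^ 2 := by gcongr; exact norm_sum_le _ _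
    _ ≤ Fintype.card ι * ∑ i, ‖v i‖ ^ 2 := sq_sum_le_card_mul_sum_sq

variable {𝕜 ι : Type*} [RCLike 𝕜] [DecidableEq ι]

variable (𝕜 ι) in
/-- The matrix with diagonal entries `1` and all other entries the real number `c`: the Gram matrix
of unit vectors with pairwise inner products `c`. -/
def equiangularMatrix (c : ℝ) : Matrix ι ι 𝕜 :=
  Matrix.of fun i j ↦ if i = j then 1 else (c : 𝕜)

theorem isHermitian_equiangularMatrix (c : ℝ) : (equiangularMatrix 𝕜 ι c).IsHermitian := by
  ext i j
  by_cases h : i = j <;> simp [equiangularMatrix, h, eq_comm]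

variable [Fintype ι]

theorem equiangularMatrix_mulVec (c : ℝ) (v : ι → 𝕜) (i : ι) :
    (equiangularMatrix 𝕜 ι c *ᵥ v) i = (1 - c) * v i + c * ∑ j, v j := by
  have hentry (j : ι) : equiangularMatrix 𝕜 ι c i j * v j =
      (if i = j then (1 - c) * v j else 0) + c * v j := by
    by_cases h : i = j
    · simp only [equiangularMatrix, of_apply, h, if_true]
      ring
    · simp only [equiangularMatrix, of_apply, h, if_false, zero_add]
  simp only [mulVec, dotProduct, hentry, Finset.sum_add_distrib, Finset.sum_ite_eq,
    Finset.mem_univ, if_true, Finset.mul_sum]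

theorem star_dotProduct_equiangularMatrix_mulVec (c : ℝ) (v : ι → 𝕜) :
    star v ⬝ᵥ (equiangularMatrix 𝕜 ι c *ᵥ v) =
      (((1 - c) * ∑ i, ‖v i‖ ^ 2 + c * ‖∑ i, v i‖ ^ 2 : ℝ) : 𝕜) := by
  have hsum : (∑ i, star (v i)) * ∑ i, v i = (‖∑ i, v i‖ : 𝕜) ^ 2 := by
    rw [← star_sum]
    exact RCLike.conj_mul _
  calc star v ⬝ᵥ (equiangularMatrix 𝕜 ι c *ᵥ v)
      = ∑ i, ((1 - c) * (star (v i) * v i) + c * (star (v i) * ∑ j, v j)) := by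
        simp only [dotProduct, equiangularMatrix_mulVec, Pi.star_apply]
        exact Finset.sum_congr rfl fun i _ ↦ by ring
    _ = (1 - c) * ∑ i, (‖v i‖ : 𝕜) ^ 2 + c * (‖∑ i, v i‖ : 𝕜) ^ 2 := by
        rw [Finset.sum_add_distrib, ← Finset.mul_sum, ← Finset.mul_sum, ← Finset.sum_mul, hsum]
        simp only [RCLike.star_def, RCLike.conj_mul]
    _ = _ := by push_cast; rfl

theorem posDef_equiangularMatrix {c : ℝ} (hc : c < 1) (hc' : 0 < 1 + (Fintype.card ι - 1) * c) :
    (equiangularMatrix 𝕜 ι c).PosDef := by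
  refine .of_dotProduct_mulVec_pos (isHermitian_equiangularMatrix c) fun v hv ↦ ?_
  rw [star_dotProduct_equiangularMatrix_mulVec, RCLike.ofReal_pos]
  have hnorm : 0 < ∑ i, ‖v i‖ ^ 2 := by
    obtain ⟨i, hi⟩ := Function.ne_iff.mp hv
    have hi' : 0 < ‖v i‖ ^ 2 := by have := norm_pos_iff.mpr hi; positivity
    exact Finset.sum_pos' (fun j _ ↦ sq_nonneg _) ⟨i, Finset.mem_univ i, hi'⟩
  rcases le_or_gt 0 c with hc0 | hc0
  · have : 0 < 1 - c := by linarith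
    positivity
  · calc 0 < (1 + (Fintype.card ι - 1) * c) * ∑ i, ‖v i‖ ^ 2 := mul_pos hc' hnorm
      _ = (1 - c) * ∑ i, ‖v i‖ ^ 2 + c * (Fintype.card ι * ∑ i, ‖v i‖ ^ 2) := by ring
      _ ≤ (1 - c) * ∑ i, ‖v i‖ ^ 2 + c * ‖∑ i, v i‖ ^ 2 :=
        (add_le_add_iff_left _).mpr <|
          mul_le_mul_of_nonpos_left (norm_sum_sq_le_card_mul_sum_norm_sq v) hc0.le

end Equiangular

section EquidistantUnitVectors

variable {𝕜 V ι : Type*} [RCLike 𝕜] [NormedAddCommGroup V] [InnerProductSpace 𝕜 V]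

theorem norm_eq_one_of_gram_eq_equiangularMatrix [DecidableEq ι] {z : ι → V} {c : ℝ}
    (hz : gram 𝕜 z = equiangularMatrix 𝕜 ι c) (i : ι) : ‖z i‖ = 1 := by
  have hinner : inner 𝕜 (z i) (z i) = 1 := by
    simpa [equiangularMatrix] using congr_fun₂ hz i i
  rw [norm_eq_sqrt_re_inner (𝕜 := 𝕜), hinner, RCLike.one_re, Real.sqrt_one]

theorem norm_sub_sq_of_gram_eq_equiangularMatrix [DecidableEq ι] {z : ι → V} {c : ℝ}
    (hz : gram 𝕜 z = equiangularMatrix 𝕜 ι c) {i j : ι} (hij : i ≠ j) :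
    ‖z i - z j‖ ^ 2 = 2 * (1 - c) := by
  have hinner : inner 𝕜 (z i) (z j) = (c : 𝕜) := by
    simpa [equiangularMatrix, hij] using congr_fun₂ hz i j
  rw [norm_sub_sq (𝕜 := 𝕜), hinner, RCLike.ofReal_re,
    norm_eq_one_of_gram_eq_equiangularMatrix hz, norm_eq_one_of_gram_eq_equiangularMatrix hz]
  ring

theorem gram_schmidt_d_exists_general [Fintype ι] [LinearOrder ι] (hι : 2 ≤ Fintype.card ι)
    {x : ι → V} (hx : LinearIndependent 𝕜 x) {d : ℝ} (hd_pos : 0 < d)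
    (hd_lt : d < √(2 * (Fintype.card ι : ℝ) / ((Fintype.card ι : ℝ) - 1))) :
    ∃ z : ι → V,
      (∀ i, span 𝕜 (z '' Iic i) = span 𝕜 (x '' Iic i)) ∧
      (∀ i, ‖z i‖ = 1) ∧
      (∀ i j, i ≠ j → ‖z i - z j‖ = d) := by
  have hcard : (0 : ℝ) < Fintype.card ι - 1 := by
    have : (2 : ℝ) ≤ Fintype.card ι := by exact_mod_cast hι
    linarith
  have hd_sq : d ^ 2 * (Fintype.card ι - 1) < 2 * Fintype.card ι := by
    rwa [Real.lt_sqrt hd_pos.le, lt_div_iff₀ hcard] at hd_lt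
  have hG : (equiangularMatrix 𝕜 ι (1 - d ^ 2 / 2)).PosDef :=
    posDef_equiangularMatrix (by nlinarith) (by linarith)
  obtain ⟨z, hz_span, hz_gram⟩ := exists_span_Iic_eq_and_gram_eq_of_posDef hx hG
  refine ⟨z, hz_span, norm_eq_one_of_gram_eq_equiangularMatrix hz_gram, fun i j hij ↦ ?_⟩
  rw [← sq_eq_sq₀ (norm_nonneg _) hd_pos.le, norm_sub_sq_of_gram_eq_equiangularMatrix hz_gram hij]
  ring

end EquidistantUnitVectors

theorem gram_schmidt_d_exists
    {V : Type*} [NormedAddCommGroup V] [InnerProductSpace ℝ V]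
    (n : ℕ) (hn : 2 ≤ n) (x : Fin n → V) (hx : LinearIndependent ℝ x)
    (d : ℝ) (hd1 : 0 < d) (hd2 : d < Real.sqrt (2 * (n : ℝ) / ((n : ℝ) - 1))) :
    ∃ z : Fin n → V,
      (∀ i : Fin n,
        Submodule.span ℝ (z '' Set.Iic i) = Submodule.span ℝ (x '' Set.Iic i)) ∧
      (∀ i : Fin n, ‖z i‖ = 1) ∧
      (∀ i j : Fin n, i ≠ j → ‖z i - z j‖ = d) :=
  gram_schmidt_d_exists_general (by rwa [Fintype.card_fin]) hx hd1 (by rwa [Fintype.card_fin])
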